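/- Let μ be a normalized n×n matrix measure on the unit circle 𝕋, let (supp μ)' denote the set of limit points of supp μ, and let f be the Schur function of μ, analytically continued through 𝕋 \ (supp μ)'. Then the isolated mass points λ of μ (i.e. isolated points λ of supp μ with μ({λ}) ≠ 0) are precisely the zeros of det(1ₙ − z f(z)) lying on 𝕋 \ (supp μ)', and for every such isolated mass point λ one has range μ({λ}) = ker(1ₙ − λ f(λ)). -/

import Mathlib

open Complex Filter Set Metric MeasureTheory
open scoped ComplexOrder

/-- An `n × n` matrix measure on the unit circle `𝕋 ⊆ ℂ`: a countably additive
assignment of positive semidefinite matrices to Borel sets, represented by a finite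
base measure concentrated on the circle together with a positive semidefinite
matrix-valued density (such a representation always exists, e.g. with respect to
the trace measure). -/
structure MatrixMeasure (n : ℕ) where
  base : Measure ℂ
  finite : IsFiniteMeasure base
  circleSupp : base (Metric.sphere (0:ℂ) 1)ᶜ = 0
  dens : ℂ → Matrix (Fin n) (Fin n) ℂ
  dens_meas : ∀ i j, Measurable fun t => dens t i j
  dens_int : ∀ i j, Integrable (fun t => dens t i j) base
  dens_psd : ∀ᵐ t ∂base, (dens t).PosSemidef

namespace MatrixMeasure

variable {n : ℕ} (μ : MatrixMeasure n)

/-- The value of the matrix measure on a set. -/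
noncomputable def meas (A : Set ℂ) : Matrix (Fin n) (Fin n) ℂ :=
  Matrix.of fun i j => ∫ t in A, μ.dens t i j ∂μ.base

/-- The support of the matrix measure: the points all of whose neighbourhoods have
nonzero measure (equivalently, the smallest closed set of full measure). -/
def supp : Set ℂ := {x : ℂ | ∀ ε > 0, μ.meas (Metric.ball x ε) ≠ 0}

/-- The set of limit points of the support. -/
def limitPts : Set ℂ := {x : ℂ | x ∈ closure (μ.supp \ {x})}

/-- The Carathéodory function `F(z) = ∫ (t+z)/(t-z) dμ(t)` of the matrix measure. -/
noncomputable def cara (z : ℂ) : Matrix (Fin n) (Fin n) ℂ :=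
  Matrix.of fun i j => ∫ t, ((t + z) / (t - z)) * μ.dens t i j ∂μ.base

/-- The Schur function `f(z) = z⁻¹ (F(z) - 1)(F(z) + 1)⁻¹` of the matrix measure. -/
noncomputable def schur (z : ℂ) : Matrix (Fin n) (Fin n) ℂ :=
  z⁻¹ • ((μ.cara z - 1) * (μ.cara z + 1)⁻¹)

end MatrixMeasure

/-!
On the unit disk `Re F ≥ 0`, so `F + 1` is invertible and `1 - z f(z) = 2 (F(z) + 1)⁻¹`. By
dominated convergence `(1 - r) / 2 • (F(rλ) + 1)` tends to `μ({λ})` as `r ↑ 1`, so that `μ({λ})`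
plays the role of the residue at `λ` of the inverse of `G(z) = 1 - z f(z)`. Since `G` is
differentiable at `λ`, passing to the limit in `G G⁻¹ = 1` gives `G(λ) μ({λ}) = 0`. If `G(λ) v = 0`,
then passing to the limit in `G⁻¹(z) (G(z) - G(λ)) v = v` gives `v = μ({λ}) (-λ G'(λ)) v`.
-/

open scoped Matrix Topology

section LinearAlgebra

variable {m K : Type*} [Fintype m] [DecidableEq m]

theorem ne_zero_iff_det_eq_zero_of_range_eq_ker [CommRing K] [IsDomain K] {A B : Matrix m m K}
    (h : LinearMap.range A.mulVecLin = LinearMap.ker B.mulVecLin) : A ≠ 0 ↔ B.det = 0 := by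
  have hA : A = 0 ↔ LinearMap.range A.mulVecLin = ⊥ := by
    rw [LinearMap.range_eq_bot, ← Matrix.toLin'_apply', LinearEquiv.map_eq_zero_iff]
  rw [Ne, hA, h, Matrix.ker_mulVecLin_eq_bot_iff, ← Matrix.exists_mulVec_eq_zero_iff]
  simp only [not_forall, ne_eq, exists_prop, and_comm]

theorem range_eq_ker_of_tendsto_smul_of_tendsto_inv_smul [Field K] [TopologicalSpace K]
    [IsTopologicalRing K] [T2Space K] {ι : Type*} {l : Filter ι} [l.NeBot] {ε : ι → K}
    {G H : ι → Matrix m m K} {G₀ D R : Matrix m m K}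
    (hε : Tendsto ε l (𝓝[≠] 0)) (hGH : ∀ᶠ i in l, G i * H i = 1)
    (hG : Tendsto (fun i => (ε i)⁻¹ • (G i - G₀)) l (𝓝 D))
    (hH : Tendsto (fun i => ε i • H i) l (𝓝 R)) :
    LinearMap.range R.mulVecLin = LinearMap.ker G₀.mulVecLin := by
  have hε₀ : Tendsto ε l (𝓝 0) := hε.mono_right nhdsWithin_le_nhds
  have hne : ∀ᶠ i in l, ε i ≠ 0 := hε.eventually self_mem_nhdsWithin
  have hG_lim : Tendsto G l (𝓝 G₀) := by
    have hlim := tendsto_const_nhds (x := G₀) |>.add (hε₀.smul hG)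
    rw [zero_smul, add_zero] at hlim
    refine hlim.congr' ?_
    filter_upwards [hne] with i hεi
    rw [smul_inv_smul₀ hεi, add_sub_cancel]
  have hG₀R : G₀ * R = 0 := by
    rw [← zero_smul K (1 : Matrix m m K)]
    refine tendsto_nhds_unique (hG_lim.mul hH) ((hε₀.smul_const 1).congr' ?_)
    filter_upwards [hGH] with i hi
    rw [mul_smul_comm, hi]
  have hRDv : ∀ v, G₀ *ᵥ v = 0 → R *ᵥ D *ᵥ v = v := by
    intro v hv
    have hlim : Tendsto (fun i => (ε i • H i * ((ε i)⁻¹ • (G i - G₀))) *ᵥ v) l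
        (𝓝 ((R * D) *ᵥ v)) :=
      ((continuous_id.matrix_mulVec continuous_const).tendsto _).comp (hH.mul hG)
    rw [Matrix.mulVec_mulVec]
    refine tendsto_nhds_unique hlim (tendsto_const_nhds.congr' ?_)
    filter_upwards [hGH, hne] with i hi hεi
    rw [smul_mul_smul_comm, mul_inv_cancel₀ hεi, one_smul, mul_sub, mul_eq_one_comm.mp hi,
      Matrix.sub_mulVec, ← Matrix.mulVec_mulVec, hv, Matrix.one_mulVec, Matrix.mulVec_zero,
      sub_zero]
  apply le_antisymm
  · rw [LinearMap.range_le_ker_iff, ← Matrix.mulVecLin_mul, hG₀R, Matrix.mulVecLin_zero]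
  · exact fun v hv => ⟨D *ᵥ v, hRDv v hv⟩

theorem isUnit_add_one_of_re_dotProduct_mulVec_nonneg [RCLike K] {A : Matrix m m K}
    (hA : ∀ v, 0 ≤ RCLike.re (star v ⬝ᵥ A *ᵥ v)) : IsUnit (A + 1) := by
  rw [Matrix.isUnit_iff_isUnit_det, isUnit_iff_ne_zero, Ne, ← Matrix.exists_mulVec_eq_zero_iff]
  rintro ⟨v, hv, hAv⟩
  have hpos : 0 < RCLike.re (star v ⬝ᵥ v) :=
    (RCLike.pos_iff.mp (Matrix.dotProduct_star_self_pos_iff.mpr hv)).1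
  have hzero : RCLike.re (star v ⬝ᵥ A *ᵥ v) + RCLike.re (star v ⬝ᵥ v) = 0 := by
    have hsum : A *ᵥ v + v = 0 := by rw [← hAv, Matrix.add_mulVec, Matrix.one_mulVec]
    rw [← map_add, ← dotProduct_add, hsum, dotProduct_zero, map_zero]
  linarith [hA v]

theorem one_sub_cayley_mul [CommRing K] {A : Matrix m m K} (hA : IsUnit (A + 1)) :
    (1 - (A - 1) * (A + 1)⁻¹) * (A + 1) = 2 := by
  rw [sub_mul, one_mul, Matrix.mul_assoc,
    Matrix.nonsing_inv_mul _ ((Matrix.isUnit_iff_isUnit_det _).mp hA), mul_one,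
    add_sub_sub_cancel, one_add_one_eq_two]

end LinearAlgebra

section Integral

variable {α m n 𝕜 : Type*} [MeasurableSpace α] {ν : Measure α} [Fintype m] [Fintype n] [RCLike 𝕜]
  {M : α → Matrix m n 𝕜}

theorem integrable_dotProduct_mulVec (hM : ∀ i j, Integrable (fun x => M x i j) ν)
    (w : m → 𝕜) (v : n → 𝕜) : Integrable (fun x => w ⬝ᵥ M x *ᵥ v) ν :=
  integrable_finsetSum _ fun i _ => (integrable_finsetSum _ fun j _ =>
    (hM i j).mul_const (v j)).const_mul (w i)

theorem integral_dotProduct_mulVec (hM : ∀ i j, Integrable (fun x => M x i j) ν)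
    (w : m → 𝕜) (v : n → 𝕜) :
    ∫ x, w ⬝ᵥ M x *ᵥ v ∂ν = w ⬝ᵥ Matrix.of (fun i j => ∫ x, M x i j ∂ν) *ᵥ v := by
  have hrow (i : m) : Integrable (fun x => ∑ j, M x i j * v j) ν :=
    integrable_finsetSum _ fun j _ => (hM i j).mul_const (v j)
  simp only [dotProduct, Matrix.mulVec, Matrix.of_apply]
  rw [integral_finsetSum _ fun i _ => (hrow i).const_mul (w i)]
  refine Finset.sum_congr rfl fun i _ => ?_
  rw [integral_const_mul, integral_finsetSum _ fun j _ => (hM i j).mul_const (v j)]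
  simp only [integral_mul_const]

end Integral

section RadialLimit

theorem tendsto_smul_nhdsWithin_ball {E : Type*} [NormedAddCommGroup E] [NormedSpace ℝ E] {x : E}
    (hx : x ≠ 0) : Tendsto (fun r : ℝ => r • x) (𝓝[<] 1) (𝓝[ball 0 ‖x‖] x) := by
  refine tendsto_nhdsWithin_iff.mpr ⟨?_, ?_⟩
  · have hcont : Continuous fun r : ℝ => r • x := by fun_prop
    simpa using (hcont.tendsto 1).mono_left nhdsWithin_le_nhds
  · filter_upwards [Ioo_mem_nhdsLT zero_lt_one] with r hr
    rw [mem_ball_zero_iff, norm_smul, Real.norm_of_nonneg hr.1.le]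
    exact mul_lt_of_lt_one_left (norm_pos_iff.mpr hx) hr.2

theorem tendsto_one_sub_ofReal_nhdsLT_one :
    Tendsto (fun r : ℝ => 1 - (r : ℂ)) (𝓝[<] 1) (𝓝[≠] 0) := by
  refine tendsto_nhdsWithin_iff.mpr ⟨?_, ?_⟩
  · have hcont : Continuous fun r : ℝ => 1 - (r : ℂ) := by fun_prop
    simpa using (hcont.tendsto 1).mono_left nhdsWithin_le_nhds
  · filter_upwards [self_mem_nhdsWithin] with r hr
    exact sub_ne_zero.mpr (mod_cast (mem_Iio.mp hr).ne')

theorem tendsto_radial_slope {E : Type*} [NormedAddCommGroup E] [NormedSpace ℂ E]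
    {f : ℂ → E} {f' : E} {x : ℂ} (hx : x ≠ 0) (hf : HasDerivWithinAt f f' (ball 0 ‖x‖) x) :
    Tendsto (fun r : ℝ => (1 - (r : ℂ))⁻¹ • (f (r • x) - f x)) (𝓝[<] 1) (𝓝 (-x • f')) := by
  have hslope := (hasDerivWithinAt_iff_tendsto_slope' (by simp)).mp hf
  refine ((hslope.comp (tendsto_smul_nhdsWithin_ball hx)).const_smul (-x)).congr fun r => ?_
  have hsub : r • x - x = -x * (1 - r) := by
    rw [Complex.real_smul]
    ring
  rw [Function.comp_apply, slope_def_module, hsub, smul_smul, mul_inv,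
    mul_inv_cancel_left₀ (neg_ne_zero.mpr hx)]

theorem exists_tendsto_radial_slope_of_entries {m n : Type*} {G : ℂ → Matrix m n ℂ} {x : ℂ}
    (hx : x ≠ 0)
    (hG : ∀ i j, DifferentiableWithinAt ℂ (fun z => G z i j) (ball 0 ‖x‖) x) :
    ∃ D, Tendsto (fun r : ℝ => (1 - (r : ℂ))⁻¹ • (G (r • x) - G x)) (𝓝[<] 1) (𝓝 D) :=
  ⟨.of fun i j => -x • derivWithin (fun z => G z i j) (ball 0 ‖x‖) x,
    tendsto_pi_nhds.mpr fun i => tendsto_pi_nhds.mpr fun j =>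
      tendsto_radial_slope (f := fun z => G z i j) hx (hG i j).hasDerivWithinAt⟩

theorem norm_add_div_sub_le {𝕜 : Type*} [NormedField 𝕜] {t z : 𝕜} (h : ‖z‖ < ‖t‖) :
    ‖(t + z) / (t - z)‖ ≤ (‖t‖ + ‖z‖) / (‖t‖ - ‖z‖) := by
  rw [norm_div]
  exact div_le_div₀ (by positivity) (norm_add_le t z) (sub_pos.mpr h) (norm_sub_norm_le t z)

theorem norm_one_sub_mul_add_div_sub_le {t x : ℂ} (hx : x ≠ 0) (htx : ‖t‖ = ‖x‖) {r : ℝ}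
    (hr : r ∈ Ioo 0 1) : ‖(1 - (r : ℂ)) * ((t + r • x) / (t - r • x))‖ ≤ 2 := by
  have hx' : 0 < ‖x‖ := norm_pos_iff.mpr hx
  have hr' : 0 < 1 - r := sub_pos.mpr hr.2
  have hrx : ‖r • x‖ = r * ‖x‖ := by rw [norm_smul, Real.norm_of_nonneg hr.1.le]
  have hε : ‖1 - (r : ℂ)‖ = 1 - r := by
    rw [← ofReal_one, ← ofReal_sub, norm_real, Real.norm_of_nonneg hr'.le]
  have hkernel := norm_add_div_sub_le (t := t) (z := r • x) <| by
    rw [hrx, htx]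
    exact mul_lt_of_lt_one_left hx' hr.2
  calc ‖(1 - (r : ℂ)) * ((t + r • x) / (t - r • x))‖
      ≤ (1 - r) * ((‖x‖ + r * ‖x‖) / (‖x‖ - r * ‖x‖)) := by
        rw [norm_mul, hε, ← hrx, ← htx]
        gcongr
    _ = 1 + r := by
        rw [show ‖x‖ - r * ‖x‖ = (1 - r) * ‖x‖ by ring]
        field_simp
    _ ≤ 2 := by linarith [hr.2]

theorem tendsto_one_sub_mul_add_div_sub {x : ℂ} (hx : x ≠ 0) (t : ℂ) :
    Tendsto (fun r : ℝ => (1 - (r : ℂ)) * ((t + r • x) / (t - r • x))) (𝓝[<] 1)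
      (𝓝 (({x} : Set ℂ).indicator 2 t)) := by
  by_cases htx : t = x
  · have hlim : Tendsto (fun r : ℝ => 1 + (r : ℂ)) (𝓝[<] 1) (𝓝 2) := by
      have hcont : Continuous fun r : ℝ => 1 + (r : ℂ) := by fun_prop
      simpa [one_add_one_eq_two] using (hcont.tendsto 1).mono_left nhdsWithin_le_nhds
    rw [htx, indicator_of_mem (mem_singleton x), Pi.ofNat_apply]
    refine hlim.congr' ?_
    filter_upwards [tendsto_one_sub_ofReal_nhdsLT_one.eventually self_mem_nhdsWithin] with r hr
    have hr' : 1 - (r : ℂ) ≠ 0 := hr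
    rw [real_smul, show x - r * x = (1 - r) * x by ring]
    field_simp
  · have hε := tendsto_one_sub_ofReal_nhdsLT_one.mono_right nhdsWithin_le_nhds
    have hrx := (tendsto_smul_nhdsWithin_ball hx).mono_right nhdsWithin_le_nhds
    rw [indicator_of_notMem (by simpa using htx)]
    simpa using hε.mul ((hrx.const_add t).div (hrx.const_sub t) (sub_ne_zero.mpr htx))

theorem tendsto_one_sub_mul_integral_add_div_sub {ν : Measure ℂ} {φ : ℂ → ℂ} {x : ℂ} (hx : x ≠ 0)
    (hν : ∀ᵐ t ∂ν, ‖t‖ = ‖x‖) (hφ : Integrable φ ν) :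
    Tendsto (fun r : ℝ => (1 - (r : ℂ)) * ∫ t, (t + r • x) / (t - r • x) * φ t ∂ν) (𝓝[<] 1)
      (𝓝 (2 * ∫ t in {x}, φ t ∂ν)) := by
  have hlimit : 2 * ∫ t in {x}, φ t ∂ν = ∫ t, ({x} : Set ℂ).indicator 2 t * φ t ∂ν := by
    rw [← integral_const_mul, ← integral_indicator (measurableSet_singleton x)]
    simp only [indicator_mul_left]
    rfl
  simp only [hlimit, ← integral_const_mul, ← mul_assoc]
  refine tendsto_integral_filter_of_dominated_convergence (fun t => 2 * ‖φ t‖) ?_ ?_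
    (hφ.norm.const_mul 2) (.of_forall fun t => (tendsto_one_sub_mul_add_div_sub hx t).mul_const _)
  · exact .of_forall fun r => (by fun_prop : Measurable fun t : ℂ =>
      (1 - (r : ℂ)) * ((t + r • x) / (t - r • x))).aestronglyMeasurable.mul hφ.1
  · filter_upwards [Ioo_mem_nhdsLT zero_lt_one] with r hr
    filter_upwards [hν] with t ht
    rw [norm_mul]
    gcongr
    exact norm_one_sub_mul_add_div_sub_le hx ht hr

end RadialLimit

namespace MatrixMeasure

variable {n : ℕ} (μ : MatrixMeasure n) {z : ℂ}

theorem ae_norm_eq_one : ∀ᵐ t ∂μ.base, ‖t‖ = 1 := by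
  have hsphere : ∀ᵐ t ∂μ.base, t ∈ sphere (0 : ℂ) 1 := mem_ae_iff.mpr μ.circleSupp
  simpa only [mem_sphere_zero_iff_norm] using hsphere

theorem integrable_add_div_sub_mul_dens (hz : ‖z‖ < 1) (i j : Fin n) :
    Integrable (fun t => (t + z) / (t - z) * μ.dens t i j) μ.base := by
  refine (μ.dens_int i j).bdd_mul (c := (1 + ‖z‖) / (1 - ‖z‖))
    (by fun_prop : Measurable fun t : ℂ => (t + z) / (t - z)).aestronglyMeasurable ?_
  filter_upwards [μ.ae_norm_eq_one] with t ht
  simpa only [ht] using norm_add_div_sub_le (ht.symm ▸ hz : ‖z‖ < ‖t‖)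

theorem re_dotProduct_cara_mulVec_nonneg (hz : ‖z‖ < 1) (v : Fin n → ℂ) :
    0 ≤ (star v ⬝ᵥ μ.cara z *ᵥ v).re := by
  have hint (i j : Fin n) :
      Integrable (fun t => (((t + z) / (t - z)) • μ.dens t) i j) μ.base :=
    μ.integrable_add_div_sub_mul_dens hz i j
  have hcara : star v ⬝ᵥ μ.cara z *ᵥ v =
      ∫ t, star v ⬝ᵥ (((t + z) / (t - z)) • μ.dens t) *ᵥ v ∂μ.base :=
    (integral_dotProduct_mulVec hint (star v) v).symm
  rw [hcara, ← RCLike.re_eq_complex_re, ← integral_re (integrable_dotProduct_mulVec hint _ v)]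
  refine integral_nonneg_of_ae ?_
  filter_upwards [μ.ae_norm_eq_one, μ.dens_psd] with t ht hdens
  have hkernel : 0 ≤ ((t + z) / (t - z)).re := by
    have hle := le_re_herglotzRieszKernel (c := 0) (mem_sphere_zero_iff_norm.mpr ht)
      (mem_ball_zero_iff.mpr hz)
    rw [sub_zero, sub_zero] at hle
    exact (div_nonneg (sub_nonneg.mpr hz.le) (by positivity)).trans hle
  obtain ⟨hre, him⟩ := Complex.nonneg_iff.mp (hdens.dotProduct_mulVec_nonneg v)
  rw [Matrix.smul_mulVec, dotProduct_smul, smul_eq_mul, RCLike.re_eq_complex_re, mul_re, ← him,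
    mul_zero, sub_zero]
  exact mul_nonneg hkernel hre

theorem one_sub_smul_schur_mul (hz : ‖z‖ < 1) (hz₀ : z ≠ 0) :
    (1 - z • μ.schur z) * ((2 : ℂ)⁻¹ • (μ.cara z + 1)) = 1 := by
  have hunit : IsUnit (μ.cara z + 1) :=
    isUnit_add_one_of_re_dotProduct_mulVec_nonneg (μ.re_dotProduct_cara_mulVec_nonneg hz)
  rw [schur, smul_inv_smul₀ hz₀, mul_smul_comm, one_sub_cayley_mul hunit,
    inv_smul_eq_iff₀ two_ne_zero, two_smul, one_add_one_eq_two]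

theorem tendsto_one_sub_smul_cara_add_one {lam : ℂ} (hlam : ‖lam‖ = 1) :
    Tendsto (fun r : ℝ => (1 - (r : ℂ)) • (2 : ℂ)⁻¹ • (μ.cara (r • lam) + 1)) (𝓝[<] 1)
      (𝓝 (μ.meas {lam})) := by
  have hlam₀ : lam ≠ 0 := norm_ne_zero_iff.mp (hlam ▸ one_ne_zero)
  have hcara : Tendsto (fun r : ℝ => (1 - (r : ℂ)) • μ.cara (r • lam)) (𝓝[<] 1)
      (𝓝 ((2 : ℂ) • μ.meas {lam})) :=
    tendsto_pi_nhds.mpr fun i => tendsto_pi_nhds.mpr fun j =>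
      tendsto_one_sub_mul_integral_add_div_sub hlam₀ (by simpa only [hlam] using μ.ae_norm_eq_one)
        (μ.dens_int i j)
  have hone : Tendsto (fun r : ℝ => (1 - (r : ℂ)) • (1 : Matrix (Fin n) (Fin n) ℂ)) (𝓝[<] 1)
      (𝓝 0) := by
    simpa using (tendsto_one_sub_ofReal_nhdsLT_one.mono_right nhdsWithin_le_nhds).smul_const
      (1 : Matrix (Fin n) (Fin n) ℂ)
  simpa [smul_comm _ (2 : ℂ)⁻¹] using (hcara.add hone).const_smul (2 : ℂ)⁻¹

theorem range_meas_singleton_eq_ker {lam : ℂ} (hlam : ‖lam‖ = 1)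
    {g : ℂ → Matrix (Fin n) (Fin n) ℂ}
    (hg : ∀ i j, DifferentiableWithinAt ℂ (fun z => g z i j) (ball 0 1) lam)
    (hagree : ∀ᶠ z in 𝓝[ball 0 1] lam, g z = μ.schur z) :
    LinearMap.range (μ.meas {lam}).mulVecLin = LinearMap.ker (1 - lam • g lam).mulVecLin := by
  have hlam₀ : lam ≠ 0 := norm_ne_zero_iff.mp (hlam ▸ one_ne_zero)
  have hradial := tendsto_smul_nhdsWithin_ball hlam₀
  rw [hlam] at hradial
  have hinv : ∀ᶠ z in 𝓝[ball 0 1] lam,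
      (1 - z • g z) * ((2 : ℂ)⁻¹ • (μ.cara z + 1)) = 1 := by
    filter_upwards [hagree, self_mem_nhdsWithin,
      nhdsWithin_le_nhds (isOpen_ne.mem_nhds hlam₀)] with z hgz hz hz₀
    rw [hgz]
    exact μ.one_sub_smul_schur_mul (mem_ball_zero_iff.mp hz) hz₀
  have hdiff (i j : Fin n) :
      DifferentiableWithinAt ℂ (fun z => (1 - z • g z) i j) (ball 0 ‖lam‖) lam := by
    rw [hlam]
    exact (differentiableWithinAt_id.mul (hg i j)).const_sub _
  obtain ⟨D, hD⟩ := exists_tendsto_radial_slope_of_entries hlam₀ hdiff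
  exact range_eq_ker_of_tendsto_smul_of_tendsto_inv_smul tendsto_one_sub_ofReal_nhdsLT_one
    (hradial.eventually hinv) hD (μ.tendsto_one_sub_smul_cara_add_one hlam)

end MatrixMeasure

theorem statement1_general {n : ℕ} (μ : MatrixMeasure n) {lam : ℂ} (hlam : ‖lam‖ = 1)
    {g : ℂ → Matrix (Fin n) (Fin n) ℂ}
    (hg : ∀ i j, DifferentiableWithinAt ℂ (fun z => g z i j) (ball 0 1) lam)
    (hagree : ∀ᶠ z in 𝓝[ball 0 1] lam, g z = μ.schur z) :
    (μ.meas {lam} ≠ 0 ↔ (1 - lam • g lam).det = 0) ∧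
      LinearMap.range (μ.meas {lam}).mulVecLin = LinearMap.ker (1 - lam • g lam).mulVecLin :=
  have hrange := μ.range_meas_singleton_eq_ker hlam hg hagree
  ⟨ne_zero_iff_det_eq_zero_of_range_eq_ker hrange, hrange⟩

/-- For a normalized matrix measure `μ` on the unit circle with Schur
function `f` (analytically continued through `𝕋 \ (supp μ)'` by a local analytic
extension `g`), the isolated mass points of `μ` are exactly the zeros of
`det (1 - z f(z))` lying on `𝕋 \ (supp μ)'`, and at such a point `λ` one has
`range μ({λ}) = ker (1 - λ f(λ))`. -/
theorem statement1 {n : ℕ} (μ : MatrixMeasure n) (hnorm : μ.meas Set.univ = 1)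
    (lam : ℂ) (hlam : lam ∈ Metric.sphere (0:ℂ) 1) (hnotlp : lam ∉ μ.limitPts)
    (U : Set ℂ) (g : ℂ → Matrix (Fin n) (Fin n) ℂ)
    (hU : IsOpen U) (hlamU : lam ∈ U)
    (hg : ∀ i j, AnalyticOnNhd ℂ (fun z => g z i j) U)
    (hagree : ∀ z ∈ U, ‖z‖ < 1 → z ≠ 0 → g z = μ.schur z) :
    (μ.meas {lam} ≠ 0 ↔ Matrix.det (1 - lam • g lam) = 0) ∧
    (μ.meas {lam} ≠ 0 →
      LinearMap.range (μ.meas {lam}).mulVecLin =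
        LinearMap.ker (1 - lam • g lam).mulVecLin) := by
  have hagree' : ∀ᶠ z in 𝓝[ball 0 1] lam, g z = μ.schur z := by
    filter_upwards [self_mem_nhdsWithin, nhdsWithin_le_nhds (hU.mem_nhds hlamU), nhdsWithin_le_nhds
      (isOpen_ne.mem_nhds (ne_zero_of_mem_unit_sphere ⟨lam, hlam⟩))] with z hz hzU hz₀
    exact hagree z hzU (mem_ball_zero_iff.mp hz) hz₀
  exact (statement1_general μ (mem_sphere_zero_iff_norm.mp hlam)
    (fun i j => (hg i j lam hlamU).differentiableAt.differentiableWithinAt) hagree').imp_right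
    fun hrange _ => hrange
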